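/- Fix N > 0 and an integer m ≥ 1, and for ε_κ > 0 define G(ε_κ) = sup over nonzero integers k1, k2 of [(m N²/2) · k2²(k1² + k2²)/(4N⁴m²(k1² + k2² + 4m²) + k2⁴) − ε_κ(k1² + k2² + 4m²)]. Then liminf as ε_κ → 0⁺ of ε_κ · G(ε_κ) ≥ 1/2⁸. In particular, the maximal lower bound on the unstable eigenvalue of the linearized dissipative MG operator is of order 1/(2⁸ ε_κ) as ε_κ → 0; a near-optimal choice of frequencies is k1 ≈ 1/(16 ε_κ) and k2 ≈ N √(m/(8 ε_κ)). -/

import Mathlib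

/-- The maximal lower bound `G(ε_κ)`: the supremum over nonzero integers `k1, k2` of
`(mN²/2)·k2²(k1²+k2²)/(4N⁴m²(k1²+k2²+4m²)+k2⁴) − ε_κ(k1²+k2²+4m²)`. -/
noncomputable def mgMaxGrowth (N : ℝ) (m : ℕ) (εκ : ℝ) : ℝ :=
  sSup { x : ℝ | ∃ k1 k2 : ℤ, k1 ≠ 0 ∧ k2 ≠ 0 ∧
    x = ((m : ℝ) * N ^ 2 / 2) * ((k2 : ℝ) ^ 2 * ((k1 : ℝ) ^ 2 + (k2 : ℝ) ^ 2))
          / (4 * N ^ 4 * (m : ℝ) ^ 2 * ((k1 : ℝ) ^ 2 + (k2 : ℝ) ^ 2 + 4 * (m : ℝ) ^ 2)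
              + (k2 : ℝ) ^ 4)
        - εκ * ((k1 : ℝ) ^ 2 + (k2 : ℝ) ^ 2 + 4 * (m : ℝ) ^ 2) }

/-!
With `s = √(k₁² + k₂²)`, AM-GM bounds the denominator below by `4 N² m s k₂²`, so the growth bound
is at most `s / 8 - ε s²`, whose maximum `1 / (2⁸ ε)` is attained at `s = 1 / (16 ε)`. Equality in
AM-GM forces `k₂² ≈ 2 m N² s`, which is negligible against `s²` as `ε → 0`. Rounding
`k₁ = 1 / (16 ε)` and `k₂ = N √(m / (8 ε))` up to integers therefore loses nothing in the limit, and
`ε * mgMaxGrowth N m ε` in fact converges to `1 / 2⁸`.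
-/

open Filter Topology

/-- The lower bound for the unstable eigenvalue at the frequencies `(k₁, k₂)`, of which
`mgMaxGrowth` is the supremum; `m` and the frequencies are allowed to be real. -/
noncomputable def mgGrowthBound (N m ε k₁ k₂ : ℝ) : ℝ :=
  m * N ^ 2 / 2 * (k₂ ^ 2 * (k₁ ^ 2 + k₂ ^ 2))
      / (4 * N ^ 4 * m ^ 2 * (k₁ ^ 2 + k₂ ^ 2 + 4 * m ^ 2) + k₂ ^ 4)
    - ε * (k₁ ^ 2 + k₂ ^ 2 + 4 * m ^ 2)

/-- The value of `ε * mgGrowthBound N m ε k₁ k₂` in the variables `u = ε k₁`, `v = ε k₂²`, in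
which the limit `ε → 0` is regular. -/
noncomputable def mgRescaledGrowth (N m ε u v : ℝ) : ℝ :=
  m * N ^ 2 / 2 * (v * (u ^ 2 + ε * v))
      / (4 * N ^ 4 * m ^ 2 * (u ^ 2 + ε * v + 4 * m ^ 2 * ε ^ 2) + v ^ 2)
    - (u ^ 2 + ε * v + 4 * m ^ 2 * ε ^ 2)

theorem mgGrowthBound_le_sqrt_div_sub (N m ε k₁ k₂ : ℝ) :
    mgGrowthBound N m ε k₁ k₂ ≤
      √(k₁ ^ 2 + k₂ ^ 2) / 8 - ε * (k₁ ^ 2 + k₂ ^ 2 + 4 * m ^ 2) := by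
  set s := √(k₁ ^ 2 + k₂ ^ 2)
  have hs : k₁ ^ 2 + k₂ ^ 2 = s ^ 2 := (Real.sq_sqrt (by positivity)).symm
  rw [mgGrowthBound, hs]
  have hden : 4 * N ^ 2 * m * s * k₂ ^ 2 ≤
      4 * N ^ 4 * m ^ 2 * (s ^ 2 + 4 * m ^ 2) + k₂ ^ 4 := by
    have hamgm := two_mul_le_add_sq (2 * N ^ 2 * m * s) (k₂ ^ 2)
    have hrest : 0 ≤ 16 * N ^ 4 * m ^ 4 := by positivity
    linarith
  refine sub_le_sub_right (div_le_of_le_mul₀ (by positivity) (by positivity) ?_) _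
  calc m * N ^ 2 / 2 * (k₂ ^ 2 * s ^ 2)
      = s / 8 * (4 * N ^ 2 * m * s * k₂ ^ 2) := by ring
    _ ≤ s / 8 * (4 * N ^ 4 * m ^ 2 * (s ^ 2 + 4 * m ^ 2) + k₂ ^ 4) := by gcongr

theorem mul_mgGrowthBound_le {ε : ℝ} (hε : 0 ≤ ε) (N m k₁ k₂ : ℝ) :
    ε * mgGrowthBound N m ε k₁ k₂ ≤ 1 / 2 ^ 8 := by
  set s := √(k₁ ^ 2 + k₂ ^ 2)
  have hs : s ^ 2 = k₁ ^ 2 + k₂ ^ 2 := Real.sq_sqrt (by positivity)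
  calc ε * mgGrowthBound N m ε k₁ k₂
      ≤ ε * (s / 8 - ε * (k₁ ^ 2 + k₂ ^ 2 + 4 * m ^ 2)) := by
        gcongr
        exact mgGrowthBound_le_sqrt_div_sub N m ε k₁ k₂
    _ = 1 / 2 ^ 8 - (ε * s - 1 / 16) ^ 2 - (2 * m * ε) ^ 2 := by rw [← hs]; ring
    _ ≤ 1 / 2 ^ 8 := by linarith [sq_nonneg (ε * s - 1 / 16), sq_nonneg (2 * m * ε)]

theorem mul_mgGrowthBound_eq_mgRescaledGrowth {ε : ℝ} (hε : ε ≠ 0) (N m k₁ k₂ : ℝ) :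
    ε * mgGrowthBound N m ε k₁ k₂ = mgRescaledGrowth N m ε (ε * k₁) (ε * k₂ ^ 2) := by
  have hnum : m * N ^ 2 / 2 * (ε * k₂ ^ 2 * ((ε * k₁) ^ 2 + ε * (ε * k₂ ^ 2))) =
      ε ^ 2 * (ε * (m * N ^ 2 / 2 * (k₂ ^ 2 * (k₁ ^ 2 + k₂ ^ 2)))) := by ring
  have hden : 4 * N ^ 4 * m ^ 2 * ((ε * k₁) ^ 2 + ε * (ε * k₂ ^ 2) + 4 * m ^ 2 * ε ^ 2)
        + (ε * k₂ ^ 2) ^ 2 =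
      ε ^ 2 * (4 * N ^ 4 * m ^ 2 * (k₁ ^ 2 + k₂ ^ 2 + 4 * m ^ 2) + k₂ ^ 4) := by ring
  rw [mgGrowthBound, mgRescaledGrowth, hnum, hden, mul_div_mul_left _ _ (pow_ne_zero 2 hε)]
  ring

-- This choice of `v` is the equality case of the AM-GM step in `mgGrowthBound_le_sqrt_div_sub`.
theorem mgRescaledGrowth_zero_two_mul {N m u : ℝ} (hN : N ≠ 0) (hm : m ≠ 0) (hu : u ≠ 0) :
    mgRescaledGrowth N m 0 u (2 * m * N ^ 2 * u) = u / 8 - u ^ 2 := by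
  have hnum : m * N ^ 2 / 2 * (2 * m * N ^ 2 * u * (u ^ 2 + 0 * (2 * m * N ^ 2 * u))) =
      u / 8 * (8 * N ^ 4 * m ^ 2 * u ^ 2) := by ring
  have hden : 4 * N ^ 4 * m ^ 2 * (u ^ 2 + 0 * (2 * m * N ^ 2 * u) + 4 * m ^ 2 * 0 ^ 2)
      + (2 * m * N ^ 2 * u) ^ 2 = 8 * N ^ 4 * m ^ 2 * u ^ 2 := by ring
  rw [mgRescaledGrowth, hnum, hden, mul_div_cancel_right₀ _ (by positivity)]
  ring

theorem tendsto_mgRescaledGrowth {ι : Type*} {l : Filter ι} {e p q : ι → ℝ} {u v : ℝ}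
    (N m : ℝ) (hv : v ≠ 0) (he : Tendsto e l (𝓝 0)) (hp : Tendsto p l (𝓝 u))
    (hq : Tendsto q l (𝓝 v)) :
    Tendsto (fun i ↦ mgRescaledGrowth N m (e i) (p i) (q i)) l
      (𝓝 (mgRescaledGrowth N m 0 u v)) := by
  have hcont : ContinuousAt (fun x : ℝ × ℝ × ℝ ↦ mgRescaledGrowth N m x.1 x.2.1 x.2.2)
      (0, u, v) := by
    have hden : 4 * N ^ 4 * m ^ 2 * (u ^ 2 + 0 * v + 4 * m ^ 2 * 0 ^ 2) + v ^ 2 ≠ 0 := by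
      rw [zero_mul, add_zero]
      positivity
    unfold mgRescaledGrowth
    fun_prop (disch := exact hden)
  exact hcont.tendsto.comp (he.prodMk_nhds (hp.prodMk_nhds hq))

theorem mgMaxGrowth_le {N ε B : ℝ} {m : ℕ}
    (hB : ∀ k₁ k₂ : ℤ, k₁ ≠ 0 → k₂ ≠ 0 → mgGrowthBound N m ε k₁ k₂ ≤ B) :
    mgMaxGrowth N m ε ≤ B :=
  csSup_le ⟨_, 1, 1, one_ne_zero, one_ne_zero, rfl⟩ <| by
    rintro _ ⟨k₁, k₂, hk₁, hk₂, rfl⟩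
    exact hB k₁ k₂ hk₁ hk₂

theorem mgGrowthBound_le_mgMaxGrowth {ε : ℝ} {k₁ k₂ : ℤ} (N : ℝ) (m : ℕ) (hε : 0 < ε)
    (hk₁ : k₁ ≠ 0) (hk₂ : k₂ ≠ 0) : mgGrowthBound N m ε k₁ k₂ ≤ mgMaxGrowth N m ε := by
  refine le_csSup ⟨1 / 2 ^ 8 / ε, ?_⟩ ⟨k₁, k₂, hk₁, hk₂, rfl⟩
  rintro _ ⟨k₁, k₂, -, -, rfl⟩
  exact (le_div_iff₀' hε).2 (mul_mgGrowthBound_le hε.le N m k₁ k₂)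

theorem mul_mgMaxGrowth_le {ε : ℝ} (N : ℝ) (m : ℕ) (hε : 0 < ε) :
    ε * mgMaxGrowth N m ε ≤ 1 / 2 ^ 8 :=
  (le_div_iff₀' hε).1 <| mgMaxGrowth_le fun k₁ k₂ _ _ ↦
    (le_div_iff₀' hε).2 (mul_mgGrowthBound_le hε.le N m k₁ k₂)

theorem tendsto_mul_natCeil_div_nhdsGT_zero {R : Type*} [TopologicalSpace R] [Field R]
    [LinearOrder R] [IsStrictOrderedRing R] [OrderTopology R] [FloorRing R] {a : R} (ha : 0 ≤ a) :
    Tendsto (fun ε : R ↦ ε * ⌈a / ε⌉₊) (𝓝[>] 0) (𝓝 a) := by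
  simpa [Function.comp_def, div_eq_mul_inv, mul_comm] using
    (tendsto_nat_ceil_mul_div_atTop ha).comp tendsto_inv_nhdsGT_zero

theorem tendsto_mul_natCeil_sqrt_div_sq_nhdsGT_zero {b : ℝ} (hb : 0 ≤ b) :
    Tendsto (fun ε : ℝ ↦ ε * (⌈√(b / ε)⌉₊ : ℝ) ^ 2) (𝓝[>] 0) (𝓝 b) := by
  have hsqrt : Tendsto (√·) (𝓝[>] 0) (𝓝[>] 0) :=
    tendsto_nhdsWithin_iff.2 ⟨
      (Real.continuous_sqrt.tendsto' 0 0 Real.sqrt_zero).mono_left nhdsWithin_le_nhds,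
      eventually_mem_nhdsWithin.mono fun _ ↦ Real.sqrt_pos.2⟩
  have hlim : Tendsto (fun ε ↦ (√ε * ⌈√b / √ε⌉₊) ^ 2) (𝓝[>] 0) (𝓝 (√b ^ 2)) :=
    ((tendsto_mul_natCeil_div_nhdsGT_zero (Real.sqrt_nonneg b)).comp hsqrt).pow 2
  rw [Real.sq_sqrt hb] at hlim
  refine hlim.congr' ?_
  filter_upwards [self_mem_nhdsWithin] with ε (hε : 0 < ε)
  rw [mul_pow, Real.sq_sqrt hε.le, Real.sqrt_div hb]

theorem tendsto_mul_mgGrowthBound_natCeil {N m : ℝ} (hN : N ≠ 0) (hm : 0 < m) :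
    Tendsto (fun ε ↦ ε * mgGrowthBound N m ε ⌈1 / 16 / ε⌉₊ ⌈√(2 * m * N ^ 2 * (1 / 16) / ε)⌉₊)
      (𝓝[>] 0) (𝓝 (1 / 2 ^ 8)) := by
  have hlim := tendsto_mgRescaledGrowth N m (by positivity)
    (tendsto_id.mono_left nhdsWithin_le_nhds)
    (tendsto_mul_natCeil_div_nhdsGT_zero (a := (1 / 16 : ℝ)) (by positivity))
    (tendsto_mul_natCeil_sqrt_div_sq_nhdsGT_zero (b := 2 * m * N ^ 2 * (1 / 16)) (by positivity))
  have hval : (1 / 16 : ℝ) / 8 - (1 / 16) ^ 2 = 1 / 2 ^ 8 := by norm_num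
  rw [mgRescaledGrowth_zero_two_mul hN hm.ne' (by norm_num), hval] at hlim
  refine hlim.congr' ?_
  filter_upwards [self_mem_nhdsWithin] with ε (hε : 0 < ε)
  exact (mul_mgGrowthBound_eq_mgRescaledGrowth hε.ne' N m _ _).symm

theorem tendsto_mul_mgMaxGrowth {N : ℝ} {m : ℕ} (hN : N ≠ 0) (hm : m ≠ 0) :
    Tendsto (fun ε ↦ ε * mgMaxGrowth N m ε) (𝓝[>] 0) (𝓝 (1 / 2 ^ 8)) := by
  have hm_pos : (0 : ℝ) < m := by positivity
  refine tendsto_of_tendsto_of_tendsto_of_le_of_le' (tendsto_mul_mgGrowthBound_natCeil hN hm_pos)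
    tendsto_const_nhds ?_ ?_ <;> filter_upwards [self_mem_nhdsWithin] with ε (hε : 0 < ε)
  · have hk₁ : 0 < ⌈1 / 16 / ε⌉₊ := Nat.ceil_pos.2 (by positivity)
    have hk₂ : 0 < ⌈√(2 * m * N ^ 2 * (1 / 16) / ε)⌉₊ := Nat.ceil_pos.2 (by positivity)
    gcongr
    exact_mod_cast mgGrowthBound_le_mgMaxGrowth N m hε (Int.natCast_ne_zero.2 hk₁.ne')
      (Int.natCast_ne_zero.2 hk₂.ne')
  · exact mul_mgMaxGrowth_le N m hε

/-- **The maximal eigenvalue lower bound is of order `1/(2⁸ε_κ)` as `ε_κ → 0⁺`:** for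
fixed `N > 0` and integer `m ≥ 1`, `liminf_{ε_κ → 0⁺} ε_κ · G(ε_κ) ≥ 1/2⁸`. -/
theorem mg_max_growth_liminf (N : ℝ) (hN : 0 < N) (m : ℕ) (hm : 1 ≤ m) :
    (1 : ℝ) / 2 ^ 8 ≤
      Filter.liminf (fun εκ : ℝ => εκ * mgMaxGrowth N m εκ) (nhdsWithin 0 (Set.Ioi 0)) :=
  (tendsto_mul_mgMaxGrowth hN.ne' (Nat.one_le_iff_ne_zero.1 hm)).liminf_eq.ge
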